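/- Bound on the uncorrupted part of the averaged block step (inequality (eq5:4)): let A ∈ ℝ^{m×n} have rows a_1ᵀ, …, a_mᵀ with ‖a_i‖ = 1 for all i, let x̂, x ∈ ℝ^n, r ∈ ℝ^m, w > 0, and q ∈ (0, 1) with qm a positive integer. Let T₁ ⊆ {1, …, m} with |T₁| ≤ qm, and suppose b_i = ⟨a_i, x̂⟩ + r_i for every i ∈ T₁. Then ‖(w/(qm))·Σ_{i ∈ T₁}(⟨a_i, x⟩ − b_i)·a_i‖² ≤ (w²·σ_max(A)²/(q²m²))·(σ_max(A)·‖x − x̂‖ + √(qm)·‖r‖_∞)². -/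

import Mathlib

/-- Euclidean inner product on finite-dimensional real coordinate space. -/
noncomputable def ip {I : Type*} [Fintype I] (u v : I → ℝ) : ℝ := ∑ i, u i * v i

/-- Euclidean norm. -/
noncomputable def enorm2 {I : Type*} [Fintype I] (v : I → ℝ) : ℝ :=
  Real.sqrt (∑ i, (v i) ^ 2)

/-- ℓ₁ norm. -/
noncomputable def norm1 {I : Type*} [Fintype I] (v : I → ℝ) : ℝ := ∑ i, |v i|

/-- ℓ∞ norm. -/
noncomputable def normInf {I : Type*} [Fintype I] (v : I → ℝ) : ℝ := ⨆ i, |v i|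

/-- Subdifferential of a convex function. -/
def subdiff {I : Type*} [Fintype I] (f : (I → ℝ) → ℝ) (x : I → ℝ) : Set (I → ℝ) :=
  {g | ∀ y, f y ≥ f x + ip g (y - x)}

/-- Bregman distance `D_f^{g}(x, y)` with respect to `f` and subgradient `g ∈ ∂f(x)`. -/
noncomputable def breg {I : Type*} [Fintype I] (f : (I → ℝ) → ℝ) (g x y : I → ℝ) : ℝ :=
  f y - f x - ip g (y - x)

/-- Fenchel conjugate. -/
noncomputable def fconj {I : Type*} [Fintype I] (f : (I → ℝ) → ℝ) (u : I → ℝ) : ℝ :=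
  ⨆ z, (ip u z - f z)

/-- Soft shrinkage (soft thresholding) operator. -/
noncomputable def softShrink {I : Type*} [Fintype I] (lam : ℝ) (x : I → ℝ) : I → ℝ :=
  fun i => Real.sign (x i) * max (|x i| - lam) 0

/-- Smallest singular value `σ_min(M) = inf_{x ≠ 0} ‖Mx‖/‖x‖`. -/
noncomputable def sigmaMin {I J : Type*} [Fintype I] [Fintype J] (M : Matrix I J ℝ) : ℝ :=
  sInf {r | ∃ x : J → ℝ, x ≠ 0 ∧ r = enorm2 (M.mulVec x) / enorm2 x}

/-- Largest singular value `σ_max(M) = sup_{x ≠ 0} ‖Mx‖/‖x‖`. -/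
noncomputable def sigmaMax {I J : Type*} [Fintype I] [Fintype J] (M : Matrix I J ℝ) : ℝ :=
  sSup {r | ∃ x : J → ℝ, x ≠ 0 ∧ r = enorm2 (M.mulVec x) / enorm2 x}

/-- Frobenius norm. -/
noncomputable def frobNorm {I J : Type*} [Fintype I] [Fintype J] (M : Matrix I J ℝ) : ℝ :=
  Real.sqrt (∑ i, ∑ j, (M i j) ^ 2)

/-- `‖A‖_{1,2} = sqrt (∑ i ‖a_i‖₁²)` where `a_iᵀ` are the rows of `A`. -/
noncomputable def norm12 {m n : ℕ} (A : Matrix (Fin m) (Fin n) ℝ) : ℝ :=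
  Real.sqrt (∑ i, (norm1 (A i)) ^ 2)

/-- Column submatrix `A_J`. -/
noncomputable def colSub {m n : ℕ} (A : Matrix (Fin m) (Fin n) ℝ) (J : Finset (Fin n)) :
    Matrix (Fin m) {j // j ∈ J} ℝ := A.submatrix id Subtype.val

/-- Row submatrix `A_I`. -/
noncomputable def rowSub {m n : ℕ} (A : Matrix (Fin m) (Fin n) ℝ) (I : Finset (Fin m)) :
    Matrix {i // i ∈ I} (Fin n) ℝ := A.submatrix Subtype.val id

/-- Submatrix `A_{I,J}` with rows in `I` and columns in `J`. -/
noncomputable def subMat {m n : ℕ} (A : Matrix (Fin m) (Fin n) ℝ)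
    (I : Finset (Fin m)) (J : Finset (Fin n)) :
    Matrix {i // i ∈ I} {j // j ∈ J} ℝ := A.submatrix Subtype.val Subtype.val

/-- `σ̃_min(A) = min{σ_min(A_J) : J ⊆ {1,…,n}, A_J ≠ 0}`. -/
noncomputable def sigmaTildeMin {m n : ℕ} (A : Matrix (Fin m) (Fin n) ℝ) : ℝ :=
  sInf {r | ∃ J : Finset (Fin n), colSub A J ≠ 0 ∧ r = sigmaMin (colSub A J)}

/-- `σ̃_{q−β,min}(A)` (with `k = (q−β)m`): min of `σ_min(A_{I,J})` over `|I| = k` and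
`J` nonempty. -/
noncomputable def sigmaTildeQBMin {m n : ℕ} (A : Matrix (Fin m) (Fin n) ℝ) (k : ℕ) : ℝ :=
  sInf {r | ∃ (I : Finset (Fin m)) (J : Finset (Fin n)),
    I.card = k ∧ J.Nonempty ∧ r = sigmaMin (subMat A I J)}

/-- Variant of `σ̃_{q−β,min}(A)` requiring moreover `A_J ≠ 0`. -/
noncomputable def sigmaTildeQBMin' {m n : ℕ} (A : Matrix (Fin m) (Fin n) ℝ) (k : ℕ) : ℝ :=
  sInf {r | ∃ (I : Finset (Fin m)) (J : Finset (Fin n)),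
    I.card = k ∧ J.Nonempty ∧ colSub A J ≠ 0 ∧ r = sigmaMin (subMat A I J)}

/-- `σ_{q−β,min}(A)` (with `k = (q−β)m`): min of `σ_min(A_I)` over `|I| = k`. -/
noncomputable def sigmaQBMin {m n : ℕ} (A : Matrix (Fin m) (Fin n) ℝ) (k : ℕ) : ℝ :=
  sInf {r | ∃ I : Finset (Fin m), I.card = k ∧ r = sigmaMin (rowSub A I)}

/-- The increasingly sorted rearrangement `y_(1) ≤ … ≤ y_(m)` of a finite tuple. -/
noncomputable def sortedVal {m : ℕ} (y : Fin m → ℝ) : Fin m → ℝ := y ∘ Tuple.sort y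

/-- The `q`-quantile of `y_1, …, y_m` in the case where `qm = k` is an integer:
`(y_(k) + y_(k+1))/2` (1-indexed). -/
noncomputable def quantileAt {m : ℕ} (k : ℕ) (y : Fin m → ℝ) : ℝ :=
  if h : 0 < k ∧ k < m then
    (sortedVal y ⟨k - 1, by omega⟩ + sortedVal y ⟨k, h.2⟩) / 2
  else 0

/-- `|x̂|_min = min{|x̂_j| : x̂_j ≠ 0}`. -/
noncomputable def xminOf {n : ℕ} (xhat : Fin n → ℝ) : ℝ :=
  sInf {r | ∃ j, xhat j ≠ 0 ∧ r = |xhat j|}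

theorem aux_nonneg {I : Type*} [Fintype I] (v : I → ℝ) : 0 ≤ enorm2 v := Real.sqrt_nonneg _

theorem aux_sq {I : Type*} [Fintype I] (v : I → ℝ) : enorm2 v ^ 2 = ∑ i, v i ^ 2 :=
  Real.sq_sqrt (Finset.sum_nonneg fun _ _ => sq_nonneg _)

theorem aux_norm {I : Type*} [Fintype I] (v : I → ℝ) : enorm2 v = ‖WithLp.toLp 2 v‖ := by
  rw [EuclideanSpace.norm_eq]; simp [enorm2]

theorem aux_cs {I : Type*} [Fintype I] (u v : I → ℝ) : ∑ i, u i * v i ≤ enorm2 u * enorm2 v :=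
  Real.sum_mul_le_sqrt_mul_sqrt _ _ _

theorem aux_pos {I : Type*} [Fintype I] (v : I → ℝ) (h : v ≠ 0) : 0 < enorm2 v := by
  rw [aux_norm, norm_pos_iff]
  simpa using h

theorem aux_frob {m n : ℕ} (A : Matrix (Fin m) (Fin n) ℝ) (v : Fin n → ℝ) :
    enorm2 (A.mulVec v) ≤ frobNorm A * enorm2 v := by
  unfold frobNorm enorm2
  have h0 : 0 ≤ ∑ i, ∑ j, (A i j) ^ 2 :=
    Finset.sum_nonneg fun _ _ => Finset.sum_nonneg fun _ _ => sq_nonneg _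
  rw [← Real.sqrt_mul h0]
  apply Real.sqrt_le_sqrt
  rw [Finset.sum_mul]
  apply Finset.sum_le_sum
  intro i _
  exact Finset.sum_mul_sq_le_sq_mul_sq Finset.univ (fun j => A i j) v

theorem aux_bdd {m n : ℕ} (A : Matrix (Fin m) (Fin n) ℝ) :
    BddAbove {r | ∃ x : Fin n → ℝ, x ≠ 0 ∧ r = enorm2 (A.mulVec x) / enorm2 x} := by
  refine ⟨frobNorm A, ?_⟩
  rintro _ ⟨x, hx, rfl⟩
  rw [div_le_iff₀ (aux_pos x hx)]
  exact aux_frob A x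

theorem aux_sigma_nonneg {m n : ℕ} (A : Matrix (Fin m) (Fin n) ℝ) : 0 ≤ sigmaMax A := by
  apply Real.sSup_nonneg
  rintro _ ⟨x, hx, rfl⟩
  exact div_nonneg (aux_nonneg _) (aux_nonneg _)

theorem aux_sigma {m n : ℕ} (A : Matrix (Fin m) (Fin n) ℝ) (v : Fin n → ℝ) :
    enorm2 (A.mulVec v) ≤ sigmaMax A * enorm2 v := by
  by_cases hv : v = 0
  · subst hv; simp [enorm2]
  · rw [← div_le_iff₀ (aux_pos v hv)]
    exact le_csSup (aux_bdd A) ⟨v, hv, rfl⟩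

theorem aux_adj {m n : ℕ} (A : Matrix (Fin m) (Fin n) ℝ) (c : Fin m → ℝ) :
    enorm2 (∑ i, c i • A i) ≤ sigmaMax A * enorm2 c := by
  set S := ∑ i, c i • A i with hS
  have h1 : enorm2 S ^ 2 = ∑ i, c i * A.mulVec S i := by
    rw [aux_sq]
    have : ∀ j, S j ^ 2 = ∑ i, c i * (A i j * S j) := by
      intro j
      have : S j = ∑ i, c i * A i j := by simp [hS]
      rw [sq]
      nth_rewrite 1 [this]
      rw [Finset.sum_mul]
      exact Finset.sum_congr rfl fun _ _ => by ring
    simp_rw [this]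
    rw [Finset.sum_comm]
    simp_rw [← Finset.mul_sum]
    rfl
  have h2 := aux_cs c (A.mulVec S)
  have h3 := mul_le_mul_of_nonneg_left (aux_sigma A S) (aux_nonneg c)
  rcases (aux_nonneg S).eq_or_lt with h | h
  · rw [← h]; exact mul_nonneg (aux_sigma_nonneg A) (aux_nonneg c)
  · refine le_of_mul_le_mul_right ?_ h
    nlinarith

theorem aux_smul {I : Type*} [Fintype I] (a : ℝ) (v : I → ℝ) :
    enorm2 (a • v) ^ 2 = a ^ 2 * enorm2 v ^ 2 := by
  rw [aux_sq, aux_sq, Finset.mul_sum]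
  simp [mul_pow]

theorem aux_sub {I : Type*} [Fintype I] (u v : I → ℝ) :
    enorm2 (u - v) ≤ enorm2 u + enorm2 v := by
  simp only [aux_norm, WithLp.toLp_sub]
  exact norm_sub_le _ _

/-- inequality (eq5:4): bound on the uncorrupted part of the averaged
block step:
`‖(w/(qm)) ∑_{i ∈ T₁} (⟨a_i,x⟩ − b_i) a_i‖² ≤ (w²σ_max²/(q²m²)) (σ_max ‖x−x̂‖ + √(qm) ‖r‖_∞)²`. -/
theorem stmt19 {m n : ℕ} (A : Matrix (Fin m) (Fin n) ℝ)
    (hrows : ∀ i, enorm2 (A i) = 1)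
    (xhat x : Fin n → ℝ) (r : Fin m → ℝ)
    (w : ℝ) (hw : 0 < w)
    (q : ℝ) (hq : q ∈ Set.Ioo (0 : ℝ) 1)
    (kq : ℕ) (hkq : (kq : ℝ) = q * m) (hkq0 : 0 < kq)
    (T1 : Finset (Fin m)) (hT1 : (T1.card : ℝ) ≤ q * m)
    (b : Fin m → ℝ) (hb : ∀ i ∈ T1, b i = ip (A i) xhat + r i) :
    enorm2 ((w / (q * m)) • ∑ i ∈ T1, (ip (A i) x - b i) • A i) ^ 2 ≤
      (w ^ 2 * (sigmaMax A) ^ 2 / (q ^ 2 * m ^ 2)) *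
        (sigmaMax A * enorm2 (x - xhat) + Real.sqrt (q * m) * normInf r) ^ 2 := by
  have hqm : 0 < q * m := by rw [← hkq]; exact_mod_cast hkq0
  set y : Fin m → ℝ := fun i => if i ∈ T1 then A.mulVec (x - xhat) i else 0 with hy
  set z : Fin m → ℝ := fun i => if i ∈ T1 then r i else 0 with hz
  have hsum : ∑ i ∈ T1, (ip (A i) x - b i) • A i = ∑ i, (y - z) i • A i := by
    rw [← Finset.sum_subset (Finset.subset_univ T1)]
    · refine Finset.sum_congr rfl fun i hi => ?_
      congr 1
      have : A.mulVec (x - xhat) i = ip (A i) x - ip (A i) xhat := by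
        rw [Matrix.mulVec_sub]; rfl
      simp only [hy, hz, Pi.sub_apply, hi, if_true, this, hb i hi]
      ring
    · intro i _ hi
      simp [hy, hz, hi]
  have hr0 : 0 ≤ normInf r := Real.iSup_nonneg fun _ => abs_nonneg _
  have hr : ∀ i, |r i| ≤ normInf r := fun i =>
    le_ciSup (f := fun i => |r i|) (Set.finite_range _).bddAbove i
  have hyb : enorm2 y ≤ sigmaMax A * enorm2 (x - xhat) := by
    refine le_trans ?_ (aux_sigma A _)
    apply Real.sqrt_le_sqrt
    refine Finset.sum_le_sum fun i _ => ?_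
    by_cases hi : i ∈ T1
    · simp [hy, hi]
    · simp [hy, hi, sq_nonneg]
  have hzb : enorm2 z ≤ Real.sqrt (q * m) * normInf r := by
    apply Real.sqrt_le_iff.2
    refine ⟨by positivity, ?_⟩
    rw [mul_pow, Real.sq_sqrt hqm.le]
    have h1 : ∑ i, z i ^ 2 = ∑ i ∈ T1, r i ^ 2 := by
      simp [hz, ite_pow, Finset.sum_ite_mem]
    rw [h1]
    calc ∑ i ∈ T1, r i ^ 2 ≤ ∑ i ∈ T1, normInf r ^ 2 :=
          Finset.sum_le_sum fun i _ => sq_le_sq' (abs_le.1 (hr i)).1 (abs_le.1 (hr i)).2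
      _ = T1.card * normInf r ^ 2 := by simp
      _ ≤ _ := mul_le_mul_of_nonneg_right hT1 (sq_nonneg _)
  have hc := (aux_sub y z).trans (add_le_add hyb hzb)
  have hfin := (aux_adj A (y - z)).trans (mul_le_mul_of_nonneg_left hc (aux_sigma_nonneg A))
  rw [hsum, aux_smul]
  have h2 := pow_le_pow_left₀ (aux_nonneg _) hfin 2
  refine (mul_le_mul_of_nonneg_left h2 (sq_nonneg (w / (q * m)))).trans_eq ?_
  rw [div_pow]
  ring
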